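/- Consider lossless transmission at source-channel rate b = 1 of arbitrarily correlated sources (S1, S2) over a discrete memoryless multiple access channel p(y1|x1,x2) with side information W1 at the receiver. The rate b = 1 is achievable if there exist a finite set Q with |Q| ≤ min{|X1|·|X2|, |Y1|} and a joint distribution of the form p(q,s1,s2,w1,x1,x2,y1) = p(q)·p(s1,s2,w1)·p(x1|q,s1)·p(x2|q,s2)·p(y1|x1,x2), where p(s1,s2,w1) is the given source/side-information pmf and p(y1|x1,x2) is the given channel law, such that: H(S1|S2,W1) < I(X1;Y1|X2,S2,W1,Q), H(S2|S1,W1) < I(X2;Y1|X1,S1,W1,Q), H(S1,S2|U,W1) < I(X1,X2;Y1|U,W1,Q), and H(S1,S2|W1) < I(X1,X2;Y1|W1), where U is the Gács–Körner common part of S1 and S2. -/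

import Mathlib

open scoped BigOperators Classical

noncomputable section

/-- Probability that the random variable `X` equals `a`, under the pmf `μ`
on the finite sample space `Ω`. -/
def prD {Ω α : Type} [Fintype Ω] (μ : Ω → ℝ) (X : Ω → α) (a : α) : ℝ :=
  ∑ ω, if X ω = a then μ ω else 0

/-- Shannon entropy (in nats) of the random variable `X` under the pmf `μ`. -/
def ent {Ω α : Type} [Fintype Ω] [Fintype α] (μ : Ω → ℝ) (X : Ω → α) : ℝ :=
  -∑ a, prD μ X a * Real.log (prD μ X a)

/-- Conditional entropy `H(X | Y)` under the pmf `μ`. -/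
def condEnt {Ω α β : Type} [Fintype Ω] [Fintype α] [Fintype β]
    (μ : Ω → ℝ) (X : Ω → α) (Y : Ω → β) : ℝ :=
  ent μ (fun ω => (X ω, Y ω)) - ent μ Y

/-- Mutual information `I(X ; Y)` under the pmf `μ`. -/
def mutInf {Ω α β : Type} [Fintype Ω] [Fintype α] [Fintype β]
    (μ : Ω → ℝ) (X : Ω → α) (Y : Ω → β) : ℝ :=
  ent μ X + ent μ Y - ent μ (fun ω => (X ω, Y ω))

/-- Conditional mutual information `I(X ; Y | Z)` under the pmf `μ`. -/
def condMutInf {Ω α β γ : Type} [Fintype Ω] [Fintype α] [Fintype β] [Fintype γ]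
    (μ : Ω → ℝ) (X : Ω → α) (Y : Ω → β) (Z : Ω → γ) : ℝ :=
  condEnt μ X Z - condEnt μ X (fun ω => (Y ω, Z ω))

/-- `p` is a probability mass function on the finite type `α`. -/
def IsPmf {α : Type} [Fintype α] (p : α → ℝ) : Prop :=
  (∀ a, 0 ≤ p a) ∧ ∑ a, p a = 1

/-- `(u1, u2)` (with values in `Fin nu`) is a Gács–Körner common part of the sources `S1`
and `S2` (obtained from the sample space `R` via the projections `projS1`, `projS2`)
under the pmf `pS`: it is a common deterministic function of both sources (a.s.), and it
has maximal entropy among all such common functions. -/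
def IsGKCommonPart {S1 S2 R : Type} [Fintype S1] [Fintype S2] [Fintype R]
    (pS : R → ℝ) (projS1 : R → S1) (projS2 : R → S2) {nu : ℕ}
    (u1 : S1 → Fin nu) (u2 : S2 → Fin nu) : Prop :=
  (∀ r, 0 < pS r → u1 (projS1 r) = u2 (projS2 r)) ∧
  ∀ (k : ℕ) (v1 : S1 → Fin k) (v2 : S2 → Fin k),
    (∀ r, 0 < pS r → v1 (projS1 r) = v2 (projS2 r)) →
    ent pS (fun r => v1 (projS1 r)) ≤ ent pS (fun r => u1 (projS1 r))

/-- Average probability of error of the joint source-channel code `(f1, f2, g)` for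
transmitting the i.i.d. source blocks `(S1^m, S2^m)` over `n` uses of the DM MAC
`chan` to a receiver having side information `W1^m`. -/
def macErr {S1 S2 W1 X1 X2 Y1 : Type} [Fintype S1] [Fintype S2] [Fintype W1]
    [Fintype X1] [Fintype X2] [Fintype Y1]
    (pS : S1 × S2 × W1 → ℝ) (chan : X1 → X2 → Y1 → ℝ) (m n : ℕ)
    (f1 : (Fin m → S1) → Fin n → X1) (f2 : (Fin m → S2) → Fin n → X2)
    (g : (Fin n → Y1) → (Fin m → W1) → (Fin m → S1) × (Fin m → S2)) : ℝ :=
  ∑ sb : Fin m → S1 × S2 × W1, ∑ yb : Fin n → Y1,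
    ((∏ i, pS (sb i)) *
      ∏ j, chan (f1 (fun i => (sb i).1) j) (f2 (fun i => (sb i).2.1) j) (yb j)) *
    (if g yb (fun i => (sb i).2.2) = (fun i => (sb i).1, fun i => (sb i).2.1)
      then 0 else 1)

/-- Source-channel rate `b` (channel uses per source sample) is achievable for the
MAC with receiver side information. -/
def macAchievable {S1 S2 W1 X1 X2 Y1 : Type} [Fintype S1] [Fintype S2] [Fintype W1]
    [Fintype X1] [Fintype X2] [Fintype Y1]
    (pS : S1 × S2 × W1 → ℝ) (chan : X1 → X2 → Y1 → ℝ) (b : ℝ) : Prop :=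
  ∀ ε : ℝ, 0 < ε → ∃ m n : ℕ, 0 < m ∧ 0 < n ∧ (n : ℝ) = b * m ∧
    ∃ (f1 : (Fin m → S1) → Fin n → X1) (f2 : (Fin m → S2) → Fin n → X2)
      (g : (Fin n → Y1) → (Fin m → W1) → (Fin m → S1) × (Fin m → S2)),
      macErr pS chan m n f1 f2 g < ε

/-- The joint single-letter distribution
`p(q,s1,s2,w1,x1,x2,y1) = p(q) p(s1,s2,w1) p(x1|q,s1) p(x2|q,s2) p(y1|x1,x2)`. -/
def macJointMeasure {S1 S2 W1 X1 X2 Y1 : Type} (nq : ℕ)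
    (pq : Fin nq → ℝ) (pS : S1 × S2 × W1 → ℝ)
    (px1 : Fin nq → S1 → X1 → ℝ) (px2 : Fin nq → S2 → X2 → ℝ)
    (chan : X1 → X2 → Y1 → ℝ) :
    Fin nq × (S1 × S2 × W1) × X1 × X2 × Y1 → ℝ :=
  fun z => pq z.1 * pS z.2.1 * px1 z.1 z.2.1.1 z.2.2.1 * px2 z.1 z.2.1.2.1 z.2.2.2.1 *
    chan z.2.2.1 z.2.2.2.1 z.2.2.2.2

/-!
Random superposition coding. Every value `u` of the common part receives a random cloud centre, and
every source letter a codeword drawn around the cloud centre of its common part, so that two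
encoders which agree on `u` also agree on the cloud centre. For a single use of source and channel,
the decoder looks for a source pair whose transmission has a large likelihood compared with the
mean number of rivals of each of four kinds: only the first letter is wrong, only the second one,
both but with the right common part, or both with a wrong common part. With threshold `Γ`, each
kind of error then costs at most `1 / Γ` on top of the probability that the true transmission
fails its likelihood test.

For `n` independent uses the likelihood ratios are products. With `Γ = exp (n δ)`, Chernoff's bound
makes the failure probability decay exponentially provided that `δ` is smaller than the relative
entropy of the joint law with respect to the mean number of rivals, and for the four kinds of
error these relative entropies are the differences between the two sides of the four inequalities.
-/

section FiniteSums

variable {K V R : Type*} [Fintype K] [DecidableEq K] [Fintype V] [CommSemiring R]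

theorem sum_prod_mul_eq_sum_mul_sum_prod (w : K → V → R) (k : K)
    (F : V → ({j // j ≠ k} → V) → R) :
    ∑ f : K → V, (∏ j, w j (f j)) * F (f k) (fun j => f j) =
      ∑ v, w k v * ∑ g : {j // j ≠ k} → V, (∏ j : {j // j ≠ k}, w j (g j)) * F v g := by
  rw [Fintype.sum_equiv (Equiv.funSplitAt k V) _
    (fun z => w k z.1 * ((∏ j : {j // j ≠ k}, w j (z.2 j)) * F z.1 z.2)), Fintype.sum_prod_type]
  · simp_rw [Finset.mul_sum]
  · intro f
    rw [← mul_assoc, Fintype.prod_eq_mul_prod_subtype_ne _ k]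
    rfl

theorem sum_prod_mul_apply (w : K → V → R) (hw : ∀ j, ∑ v, w j v = 1) (k : K) (F : V → R) :
    ∑ f : K → V, (∏ j, w j (f j)) * F (f k) = ∑ v, w k v * F v := by
  rw [sum_prod_mul_eq_sum_mul_sum_prod w k fun v _ => F v]
  simp [← Finset.sum_mul, ← Fintype.prod_sum, hw]

theorem sum_prod_mul_apply_of_ne (w : K → V → R) (hw : ∀ j, ∑ v, w j v = 1) {k k' : K}
    (hk : k' ≠ k) (F : V → V → R) :
    ∑ f : K → V, (∏ j, w j (f j)) * F (f k) (f k') =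
      ∑ v, w k v * ∑ v', w k' v' * F v v' := by
  rw [sum_prod_mul_eq_sum_mul_sum_prod w k fun v g => F v (g ⟨k', hk⟩)]
  exact Finset.sum_congr rfl fun v _ => congrArg (w k v * ·) <|
    sum_prod_mul_apply (fun j : {j // j ≠ k} => w j) (fun j => hw j) ⟨k', hk⟩ (F v)

/-- The conditional law of the value at a second key given that the first key received `v`, when
distinct keys receive independent values and the second key draws from `w`. -/
def redraw (same : Prop) (w : V → R) (v v' : V) : R :=
  if same then if v' = v then 1 else 0 else w v'

theorem sum_prod_mul_apply_apply (w : K → V → R) (hw : ∀ j, ∑ v, w j v = 1) (k k' : K)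
    (F : V → V → R) :
    ∑ f : K → V, (∏ j, w j (f j)) * F (f k) (f k') =
      ∑ v, w k v * ∑ v', redraw (k' = k) (w k') v v' * F v v' := by
  by_cases hk : k' = k
  · subst hk
    rw [sum_prod_mul_apply w hw k' fun v => F v v]
    simp [redraw]
  · simp only [sum_prod_mul_apply_of_ne w hw hk F, redraw, hk, if_false]

end FiniteSums

theorem IsPmf.pi {K V : Type} [Fintype K] [DecidableEq K] [Fintype V] {w : K → V → ℝ}
    (hw : ∀ k, IsPmf (w k)) :
    IsPmf fun f : K → V => ∏ k, w k (f k) :=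
  ⟨fun f => Finset.prod_nonneg fun k _ => (hw k).1 (f k), by
    simp [← Fintype.prod_sum, (hw _).2]⟩

theorem IsPmf.bind {α β : Type} [Fintype α] [Fintype β] {p : α → ℝ} (hp : IsPmf p)
    {k : α → β → ℝ} (hk : ∀ a, IsPmf (k a)) : IsPmf fun z : α × β => p z.1 * k z.1 z.2 :=
  ⟨fun z => mul_nonneg (hp.1 z.1) ((hk z.1).1 z.2), by
    simp [Fintype.sum_prod_type, ← Finset.mul_sum, (hk _).2, hp.2]⟩

theorem IsPmf.exists_pos {α : Type} [Fintype α] {p : α → ℝ} (hp : IsPmf p) : ∃ a, 0 < p a := by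
  obtain ⟨a, -, ha⟩ := Finset.exists_ne_zero_of_sum_ne_zero (hp.2.trans_ne one_ne_zero)
  exact ⟨a, (hp.1 a).lt_of_ne' ha⟩

theorem IsPmf.nonempty {α : Type} [Fintype α] {p : α → ℝ} (hp : IsPmf p) : Nonempty α :=
  hp.exists_pos.nonempty

theorem IsPmf.exists_le_of_sum_mul_le {α : Type} [Fintype α] {p : α → ℝ} (hp : IsPmf p)
    {h : α → ℝ} {B : ℝ} (hB : ∑ a, p a * h a ≤ B) : ∃ a, h a ≤ B := by
  by_contra! hlt
  obtain ⟨a₀, ha₀⟩ := hp.exists_pos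
  have hsum : ∑ a, p a * B < ∑ a, p a * h a :=
    Finset.sum_lt_sum (fun a _ => mul_le_mul_of_nonneg_left (hlt a).le (hp.1 a))
      ⟨a₀, Finset.mem_univ a₀, mul_lt_mul_of_pos_left (hlt a₀) ha₀⟩
  rw [← Finset.sum_mul, hp.2, one_mul] at hsum
  exact hsum.not_ge hB

theorem ite_epsilon_eq_le {α : Type*} [Fintype α] [DecidableEq α] [Nonempty α]
    (P : α → Prop) (a : α) :
    (if Classical.epsilon P = a then 0 else 1 : ℝ) ≤
      (if P a then 0 else 1) + ∑ a' with a' ≠ a, if P a' then 1 else 0 := by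
  have hsum (a' : α) : (0 : ℝ) ≤ if P a' then 1 else 0 := by positivity
  split_ifs with heq ha ha
  · exact add_nonneg le_rfl (Finset.sum_nonneg fun a' _ => hsum a')
  · exact add_nonneg zero_le_one (Finset.sum_nonneg fun a' _ => hsum a')
  · refine le_add_of_nonneg_of_le le_rfl ?_
    have hP : P (Classical.epsilon P) := Classical.epsilon_spec ⟨a, ha⟩
    refine le_trans ?_ (Finset.single_le_sum (fun a' _ => hsum a')
      (Finset.mem_filter.mpr ⟨Finset.mem_univ _, heq⟩))
    rw [if_pos hP]
  · exact le_add_of_nonneg_right (Finset.sum_nonneg fun a' _ => hsum a')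

/-! ### A Chernoff bound for likelihood ratios -/

section Chernoff

variable {Ω : Type} [Fintype Ω] {p r : Ω → ℝ}

/-- The Kullback–Leibler divergence (in nats) of the pmf `p` from the finite measure `r`. It is the
usual one only if `r` is positive wherever `p` is, because `Real.log 0 = 0`. -/
def relEntropy (p r : Ω → ℝ) : ℝ :=
  ∑ ω, p ω * (Real.log (p ω) - Real.log (r ω))

theorem IsPmf.exists_sum_mul_exp_lt_one (hp : IsPmf p) {L : Ω → ℝ} (hL : ∑ ω, p ω * L ω < 0) :
    ∃ t, 0 < t ∧ ∑ ω, p ω * Real.exp (t * L ω) < 1 := by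
  have hderiv : HasDerivAt (fun t => ∑ ω, p ω * Real.exp (t * L ω)) (∑ ω, p ω * L ω) 0 :=
    HasDerivAt.fun_sum fun ω _ => by
      simpa using (((hasDerivAt_id (0 : ℝ)).mul_const (L ω)).exp.const_mul (p ω))
  obtain ⟨t, hslope, ht⟩ := ((hderiv.tendsto_slope_zero_right.eventually
    (gt_mem_nhds hL)).and self_mem_nhdsWithin).exists
  have ht : 0 < t := ht
  simp only [zero_add, zero_mul, Real.exp_zero, mul_one, hp.2, smul_eq_mul] at hslope
  exact ⟨t, ht, sub_neg.mp (neg_of_mul_neg_right hslope (inv_nonneg.mpr ht.le))⟩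

theorem IsPmf.exists_likelihoodRatio_tail_le_pow (hp : IsPmf p) (hpr : ∀ ω, 0 < p ω → 0 < r ω)
    {δ : ℝ} (hδ : δ < relEntropy p r) :
    ∃ c : ℝ, 0 ≤ c ∧ c < 1 ∧ ∀ n : ℕ, ∑ ω : Fin n → Ω, (∏ i, p (ω i)) *
      (if ∏ i, p (ω i) ≤ Real.exp (n * δ) * ∏ i, r (ω i) then 1 else 0) ≤ c ^ n := by
  have hL : ∑ ω, p ω * (δ - (Real.log (p ω) - Real.log (r ω))) < 0 := by
    simpa only [mul_sub _ δ, Finset.sum_sub_distrib, ← Finset.sum_mul, hp.2, one_mul, sub_neg,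
      relEntropy] using hδ
  obtain ⟨t, ht, htlt⟩ := hp.exists_sum_mul_exp_lt_one hL
  refine ⟨_, Finset.sum_nonneg fun ω _ => mul_nonneg (hp.1 ω) (Real.exp_pos _).le, htlt,
    fun n => ?_⟩
  rw [← Fin.prod_const, Fintype.prod_sum]
  refine Finset.sum_le_sum fun ω _ => ?_
  rw [Finset.prod_mul_distrib, ← Real.exp_sum, ← Finset.mul_sum]
  have hprod : 0 ≤ ∏ i, p (ω i) := Finset.prod_nonneg fun i _ => hp.1 (ω i)
  obtain hz | hz := hprod.eq_or_lt
  · simp only [← hz, zero_mul, le_refl]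
  refine mul_le_mul_of_nonneg_left ?_ hz.le
  split_ifs with hle
  · have hpos (i : Fin n) : 0 < p (ω i) :=
      (hp.1 _).lt_of_ne' (Finset.prod_ne_zero_iff.mp hz.ne' i (Finset.mem_univ i))
    have hlog := Real.log_le_log hz hle
    rw [Real.log_mul (Real.exp_pos _).ne' (Finset.prod_pos fun i _ => hpr _ (hpos i)).ne',
      Real.log_exp, Real.log_prod fun i _ => (hpos i).ne',
      Real.log_prod fun i _ => (hpr _ (hpos i)).ne'] at hlog
    refine Real.one_le_exp (mul_nonneg ht.le ?_)
    simp only [Finset.sum_sub_distrib, Fin.sum_const, nsmul_eq_mul]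
    linarith
  · exact (Real.exp_pos _).le

end Chernoff

/-! ### Entropies of discrete random variables -/

section Entropy

variable {Ω α β γ : Type} [Fintype Ω] {μ : Ω → ℝ}

theorem prD_apply_pos (hμ : ∀ ω, 0 ≤ μ ω) (X : Ω → α) {ω : Ω} (hω : 0 < μ ω) :
    0 < prD μ X (X ω) := by
  refine Finset.sum_pos' (fun ω' _ => ?_) ⟨ω, Finset.mem_univ ω, by rwa [if_pos rfl]⟩
  split_ifs
  exacts [hμ ω', le_rfl]

theorem prD_apply_of_injective {X : Ω → α} (hX : Function.Injective X) (ω : Ω) :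
    prD μ X (X ω) = μ ω := by
  simp [prD, hX.eq_iff]

variable [Fintype α] [Fintype β] [Fintype γ]

theorem ent_eq_neg_sum_mul_log (μ : Ω → ℝ) (X : Ω → α) :
    ent μ X = -∑ ω, μ ω * Real.log (prD μ X (X ω)) := by
  have h (a : α) : prD μ X a * Real.log (prD μ X a) =
      ∑ ω, if X ω = a then μ ω * Real.log (prD μ X (X ω)) else 0 := by
    conv_lhs => rw [prD, Finset.sum_mul]
    refine Finset.sum_congr rfl fun ω _ => ?_
    split_ifs with ha
    · rw [← ha, prD]
    · rw [zero_mul]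
  rw [ent, Finset.sum_congr rfl fun a _ => h a, Finset.sum_comm]
  simp only [Finset.sum_ite_eq, Finset.mem_univ, if_true]

theorem ent_congr {X : Ω → α} {X' : Ω → β} (h : ∀ ω ω', X ω = X ω' ↔ X' ω = X' ω') :
    ent μ X = ent μ X' := by
  simp only [ent_eq_neg_sum_mul_log, prD, h]

theorem ent_eq_sub_sum_mul_log (hμ : ∀ ω, 0 ≤ μ ω) {X : Ω → α} {Y : Ω → β} {L : Ω → ℝ}
    (h : ∀ ω, prD μ X (X ω) = prD μ Y (Y ω) * L ω) :
    ent μ X = ent μ Y - ∑ ω, μ ω * Real.log (L ω) := by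
  rw [ent_eq_neg_sum_mul_log, ent_eq_neg_sum_mul_log, ← neg_add', neg_inj,
    ← Finset.sum_add_distrib]
  refine Finset.sum_congr rfl fun ω _ => ?_
  obtain h0 | hpos := (hμ ω).eq_or_lt
  · simp only [← h0, zero_mul, add_zero]
  · have hX := prD_apply_pos hμ X hpos
    rw [h] at hX ⊢
    rw [Real.log_mul (left_ne_zero_of_mul hX.ne') (right_ne_zero_of_mul hX.ne'), mul_add]

theorem condMutInf_eq_condEnt_sub_condEnt (μ : Ω → ℝ) (X : Ω → α) (Y : Ω → β) (Z : Ω → γ) :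
    condMutInf μ X Y Z = condEnt μ Y Z - condEnt μ Y (fun ω => (X ω, Z ω)) := by
  have h : ent μ (fun ω => (X ω, Y ω, Z ω)) = ent μ (fun ω => (Y ω, X ω, Z ω)) :=
    ent_congr fun ω ω' => by simp only [Prod.mk.injEq, and_left_comm]
  simp only [condMutInf, condEnt, h]
  ring

end Entropy

/-- A single-letter superposition coding scheme for correlated sources over a multiple access
channel: a source `(A, B, W)` with receiver side information `W`, a common part `U` of `A` and `B`,
a cloud-centre law on `Q`, input laws given a cloud centre and a source letter, and a channel. -/
structure SuperpositionScheme (A B W X Z Y Q U : Type) [Fintype A] [Fintype B] [Fintype W]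
    [Fintype X] [Fintype Z] [Fintype Y] [Fintype Q] where
  cloud : Q → ℝ
  source : A × B × W → ℝ
  enc₁ : Q → A → X → ℝ
  enc₂ : Q → B → Z → ℝ
  chan : X → Z → Y → ℝ
  common₁ : A → U
  common₂ : B → U
  isPmf_cloud : IsPmf cloud
  isPmf_source : IsPmf source
  isPmf_enc₁ : ∀ q a, IsPmf (enc₁ q a)
  isPmf_enc₂ : ∀ q b, IsPmf (enc₂ q b)
  isPmf_chan : ∀ x z, IsPmf (chan x z)
  common_eq : ∀ s, 0 < source s → common₁ s.1 = common₂ s.2.1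

namespace SuperpositionScheme

variable {A B W X Z Y Q U : Type} [Fintype A] [Fintype B] [Fintype W] [Fintype X] [Fintype Z]
  [Fintype Y] [Fintype Q] (M : SuperpositionScheme A B W X Z Y Q U)

/-- The joint law `p(q) p(a,b,w) p(x|q,a) p(z|q,b) p(y|x,z)` of a scheme. -/
def joint (ω : Q × (A × B × W) × X × Z × Y) : ℝ :=
  M.cloud ω.1 * M.source ω.2.1 * M.enc₁ ω.1 ω.2.1.1 ω.2.2.1 * M.enc₂ ω.1 ω.2.1.2.1 ω.2.2.2.1 *
    M.chan ω.2.2.1 ω.2.2.2.1 ω.2.2.2.2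

theorem isPmf_joint : IsPmf M.joint := by
  have h := M.isPmf_cloud.bind fun q => M.isPmf_source.bind fun s =>
    (M.isPmf_enc₁ q s.1).bind fun x => (M.isPmf_enc₂ q s.2.1).bind fun z => M.isPmf_chan x z
  convert h using 2 with ω
  simp only [joint, mul_assoc]

theorem factors_pos_of_joint_pos {ω : Q × (A × B × W) × X × Z × Y} (h : 0 < M.joint ω) :
    0 < M.cloud ω.1 ∧ 0 < M.source ω.2.1 ∧ 0 < M.enc₁ ω.1 ω.2.1.1 ω.2.2.1 ∧
      0 < M.enc₂ ω.1 ω.2.1.2.1 ω.2.2.2.1 ∧ 0 < M.chan ω.2.2.1 ω.2.2.2.1 ω.2.2.2.2 := by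
  have hne := h.ne'
  simp only [joint, mul_ne_zero_iff, and_assoc] at hne
  exact hne.imp (M.isPmf_cloud.1 _).lt_of_ne' <| And.imp (M.isPmf_source.1 _).lt_of_ne' <|
    And.imp ((M.isPmf_enc₁ _ _).1 _).lt_of_ne' <| And.imp ((M.isPmf_enc₂ _ _).1 _).lt_of_ne'
      ((M.isPmf_chan _ _).1 _).lt_of_ne'

/-- The error probability of deterministic encoders `f`, `g` and a decoder `d` for a single use of
the source and the channel of the scheme. -/
def errorProb (f : A → X) (g : B → Z) (d : Y → W → A × B) : ℝ :=
  ∑ s, ∑ y, M.source s * M.chan (f s.1) (g s.2.1) y *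
    if d y s.2.2 = (s.1, s.2.1) then 0 else 1

/-- The law of the codewords assigned to a source pair whose letters share their common part. -/
def codewordProb (a : A) (b : B) (t : Q × X × Z) : ℝ :=
  M.cloud t.1 * (M.enc₁ t.1 a t.2.1 * M.enc₂ t.1 b t.2.2)

theorem codewordProb_nonneg (a : A) (b : B) (t : Q × X × Z) : 0 ≤ M.codewordProb a b t :=
  mul_nonneg (M.isPmf_cloud.1 _) (mul_nonneg ((M.isPmf_enc₁ _ _).1 _) ((M.isPmf_enc₂ _ _).1 _))

/-- The outcome of a single use of the scheme in which the source emits `s`, the cloud centre and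
codewords are `t` and the channel output is `y`. -/
def transmission (t : Q × X × Z) (s : A × B × W) (y : Y) : Q × (A × B × W) × X × Z × Y :=
  (t.1, s, t.2.1, t.2.2, y)

theorem sum_transmission (F : Q × (A × B × W) × X × Z × Y → ℝ) :
    ∑ ω, F ω = ∑ s, ∑ y, ∑ t, F (transmission t s y) := by
  simp only [← Fintype.sum_prod_type']
  exact Fintype.sum_equiv ⟨fun ω => (ω.2.1, ω.2.2.2.2, ω.1, ω.2.2.1, ω.2.2.2.1),
    fun v => transmission v.2.2 v.1 v.2.1, fun _ => rfl, fun _ => rfl⟩ _ _ fun _ => rfl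

theorem sum_joint_mul (F : Q × (A × B × W) × X × Z × Y → ℝ) :
    ∑ ω, M.joint ω * F ω = ∑ s, M.source s * ∑ y, ∑ t, M.codewordProb s.1 s.2.1 t *
      (M.chan t.2.1 t.2.2 y * F (transmission t s y)) := by
  simp only [sum_transmission, Finset.mul_sum]
  refine Finset.sum_congr rfl fun s _ => Finset.sum_congr rfl fun y _ =>
    Finset.sum_congr rfl fun t _ => ?_
  simp only [joint, transmission, codewordProb]
  ring

theorem sum_section_le {F : Q × (A × B × W) × X × Z × Y → ℝ} (hF : ∀ ω, 0 ≤ F ω)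
    (w : W) (y : Y) :
    ∑ s : A × B, ∑ t, F (transmission t (s.1, s.2, w) y) ≤ ∑ ω, F ω := by
  rw [sum_transmission]
  simp only [Fintype.sum_prod_type (α₂ := B × W), Fintype.sum_prod_type (α₂ := B),
    Fintype.sum_prod_type (α₂ := W)]
  refine Finset.sum_le_sum fun a _ => Finset.sum_le_sum fun b _ => ?_
  calc ∑ t, F (transmission t (a, b, w) y)
    _ ≤ ∑ y, ∑ t, F (transmission t (a, b, w) y) :=
      Finset.single_le_sum (f := fun y => ∑ t, F (transmission t (a, b, w) y))
        (fun y _ => Finset.sum_nonneg fun t _ => hF _) (Finset.mem_univ y)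
    _ ≤ ∑ w, ∑ y, ∑ t, F (transmission t (a, b, w) y) :=
      Finset.single_le_sum (f := fun w => ∑ y, ∑ t, F (transmission t (a, b, w) y))
        (fun w _ => Finset.sum_nonneg fun y _ => Finset.sum_nonneg fun t _ => hF _)
        (Finset.mem_univ w)

/-! ### Random superposition codebooks -/

/-- A superposition codebook: a cloud centre for every value of the common part, and a codeword for
every value of each source. -/
abbrev Codebook (_ : SuperpositionScheme A B W X Z Y Q U) : Type := (U → Q) × (A → X) × (B → Z)

/-- The cloud centre and the two codewords which a codebook assigns to a source pair. -/
def codewords (c : M.Codebook) (a : A) (b : B) : Q × X × Z :=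
  (c.1 (M.common₁ a), c.2.1 a, c.2.2 b)

section Codebook

variable [Fintype U]

/-- The law of the random codebook: independent cloud centres, and codewords that are independent
given the cloud centre of the common part of their source letter. -/
def codebookProb (c : M.Codebook) : ℝ :=
  (∏ u, M.cloud (c.1 u)) *
    ((∏ a, M.enc₁ (c.1 (M.common₁ a)) a (c.2.1 a)) * ∏ b, M.enc₂ (c.1 (M.common₂ b)) b (c.2.2 b))

theorem isPmf_codebookProb : IsPmf M.codebookProb :=
  (IsPmf.pi fun _ => M.isPmf_cloud).bind fun c =>
    (IsPmf.pi fun a => M.isPmf_enc₁ (c (M.common₁ a)) a).bind fun _ =>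
      IsPmf.pi fun b => M.isPmf_enc₂ (c (M.common₂ b)) b

theorem sum_codebookProb_mul_pair {a a' : A} {b b' : B} (hu : M.common₁ a = M.common₂ b)
    (hu' : M.common₁ a' = M.common₂ b') (F : Q × X × Z → Q × X × Z → ℝ) :
    ∑ c, M.codebookProb c * F (M.codewords c a b) (M.codewords c a' b') =
      ∑ t, M.codewordProb a b t * ∑ t', redraw (M.common₁ a' = M.common₁ a) M.cloud t.1 t'.1 *
        (redraw (a' = a) (M.enc₁ t'.1 a') t.2.1 t'.2.1 *
          redraw (b' = b) (M.enc₂ t'.1 b') t.2.2 t'.2.2) * F t t' := by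
  have hcloud (Φ : Q → Q → ℝ) := sum_prod_mul_apply_apply (fun _ => M.cloud)
    (fun _ => M.isPmf_cloud.2) (M.common₁ a) (M.common₁ a') Φ
  have hfst (c : U → Q) (Φ : X → X → ℝ) :=
    sum_prod_mul_apply_apply _ (fun a => (M.isPmf_enc₁ (c (M.common₁ a)) a).2) a a' Φ
  have hsnd (c : U → Q) (Φ : Z → Z → ℝ) :=
    sum_prod_mul_apply_apply _ (fun b => (M.isPmf_enc₂ (c (M.common₂ b)) b).2) b b' Φ
  simp only [← hu, ← hu'] at hsnd
  calc ∑ c, M.codebookProb c * F (M.codewords c a b) (M.codewords c a' b')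
    _ = ∑ q, M.cloud q * ∑ q', redraw (M.common₁ a' = M.common₁ a) M.cloud q q' *
        ∑ x, M.enc₁ q a x * ∑ x', redraw (a' = a) (M.enc₁ q' a') x x' *
          ∑ z, M.enc₂ q b z * ∑ z', redraw (b' = b) (M.enc₂ q' b') z z' *
            F (q, x, z) (q', x', z') := by
      simp only [← hcloud, ← hfst, ← hsnd]
      simp only [Fintype.sum_prod_type, Finset.mul_sum, codebookProb, codewords, mul_assoc]
    _ = _ := by
      simp only [Finset.mul_sum, Fintype.sum_prod_type]
      refine Finset.sum_congr rfl fun q _ => ?_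
      rw [Finset.sum_comm]
      refine Finset.sum_congr rfl fun x _ => ?_
      conv_rhs => rw [Finset.sum_comm]
      refine Finset.sum_congr rfl fun q' _ => ?_
      rw [Finset.sum_comm]
      refine Finset.sum_congr rfl fun z _ => Finset.sum_congr rfl fun x' _ =>
        Finset.sum_congr rfl fun z' _ => ?_
      simp only [codewordProb]
      ring

theorem sum_codebookProb_mul_codewords {a : A} {b : B} (hu : M.common₁ a = M.common₂ b)
    (F : Q × X × Z → ℝ) :
    ∑ c, M.codebookProb c * F (M.codewords c a b) = ∑ t, M.codewordProb a b t * F t := by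
  rw [M.sum_codebookProb_mul_pair hu hu fun t _ => F t]
  simp [redraw, Fintype.sum_prod_type]

end Codebook

/-! ### Decoding errors -/

/-- The ways a wrong source pair can look correct: only the first letter is wrong, only the second
one, both but with the right common part, or both with a wrong common part. -/
inductive DecodingError
  | fst | snd | both | common

instance : Fintype DecodingError where
  elems := {.fst, .snd, .both, .common}
  complete e := by cases e <;> simp

/-- `ω'` agrees with `ω` in the coordinates which, after an error of kind `e`, the transmission `ω'`
of the wrong source pair shares with the true transmission `ω`. -/
def Agree : DecodingError → (ω' ω : Q × (A × B × W) × X × Z × Y) → Prop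
  | .fst, (q', (_, b', w'), _, z', y'), (q, (_, b, w), _, z, y) =>
      (y', z', b', w', q') = (y, z, b, w, q)
  | .snd, (q', (a', _, w'), x', _, y'), (q, (a, _, w), x, _, y) =>
      (y', x', a', w', q') = (y, x, a, w, q)
  | .both, (q', (a', _, w'), _, _, y'), (q, (a, _, w), _, _, y) =>
      (y', M.common₁ a', w', q') = (y, M.common₁ a, w, q)
  | .common, (_, (_, _, w'), _, _, y'), (_, (_, _, w), _, _, y) => (y', w') = (y, w)

/-- The conditional law, after an error of kind `e`, of the coordinates of the transmission of the
wrong source pair which are independent of the true transmission. -/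
def fresh : DecodingError → Q × (A × B × W) × X × Z × Y → ℝ
  | .fst, (q, (a, _, _), x, _, _) => M.enc₁ q a x
  | .snd, (q, (_, b, _), _, z, _) => M.enc₂ q b z
  | .both, (q, (a, b, _), x, z, _) => M.enc₁ q a x * M.enc₂ q b z
  | .common, (q, (a, b, _), x, z, _) => M.cloud q * (M.enc₁ q a x * M.enc₂ q b z)

/-- A bound on the expected number of wrong source pairs which cause an error of kind `e` and whose
transmission is `ω'`, given that the true transmission is `ω`. -/
def rivalCount (e : DecodingError) (ω ω' : Q × (A × B × W) × X × Z × Y) : ℝ :=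
  if M.Agree e ω' ω then M.fresh e ω' else 0

/-- The mean of `rivalCount` over the true transmission: the measure against which the likelihood
of a candidate transmission is tested in order to exclude errors of kind `e`. -/
def meanRivalCount (e : DecodingError) (ω' : Q × (A × B × W) × X × Z × Y) : ℝ :=
  ∑ ω, M.joint ω * M.rivalCount e ω ω'

theorem rivalCount_nonneg (e : DecodingError) (ω ω' : Q × (A × B × W) × X × Z × Y) :
    0 ≤ M.rivalCount e ω ω' := by
  have h₁ := (M.isPmf_enc₁ ω'.1 ω'.2.1.1).1 ω'.2.2.1
  have h₂ := (M.isPmf_enc₂ ω'.1 ω'.2.1.2.1).1 ω'.2.2.2.1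
  have hq := M.isPmf_cloud.1 ω'.1
  rw [rivalCount]
  split_ifs
  · cases e <;> simp only [fresh] <;> positivity
  · exact le_rfl

theorem exists_redraw_mul_eq_rivalCount {a a' : A} {b b' : B} (hu : M.common₁ a = M.common₂ b)
    (hu' : M.common₁ a' = M.common₂ b') (hne : (a', b') ≠ (a, b)) (w : W) (y : Y) :
    ∃ e, ∀ t t', redraw (M.common₁ a' = M.common₁ a) M.cloud t.1 t'.1 *
        (redraw (a' = a) (M.enc₁ t'.1 a') t.2.1 t'.2.1 *
          redraw (b' = b) (M.enc₂ t'.1 b') t.2.2 t'.2.2) =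
      M.rivalCount e (transmission t (a, b, w) y) (transmission t' (a', b', w) y) := by
  by_cases ha : a' = a
  · have hb : b' ≠ b := fun hb => hne (by rw [ha, hb])
    exact ⟨.snd, by simp [redraw, rivalCount, transmission, Agree, fresh, ha, hb, ite_and]⟩
  by_cases hb : b' = b
  · have hc : M.common₁ a' = M.common₁ a := by rw [hu', hu, hb]
    exact ⟨.fst, by simp [redraw, rivalCount, transmission, Agree, fresh, ha, hb, hc, ite_and]⟩
  by_cases hc : M.common₁ a' = M.common₁ a
  · exact ⟨.both, by simp [redraw, rivalCount, transmission, Agree, fresh, ha, hb, hc]⟩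
  · exact ⟨.common, by simp [redraw, rivalCount, transmission, Agree, fresh, ha, hb, hc]⟩

/-! ### One-shot coding bound -/

section OneShot

/-- The outcomes which the threshold decoder accepts: their likelihood exceeds `Γ` times the
expected number of wrong source pairs showing the same outcome. -/
def Accepts (Γ : ℝ) (ω : Q × (A × B × W) × X × Z × Y) : Prop :=
  ∀ e, Γ * M.meanRivalCount e ω < M.joint ω

/-- The threshold decoder: it returns some source pair whose transmission it accepts. -/
def decoder [Nonempty (A × B)] (Γ : ℝ) (c : M.Codebook) (y : Y) (w : W) : A × B :=
  Classical.epsilon fun s =>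
    M.Accepts Γ (transmission (M.codewords c s.1 s.2) (s.1, s.2, w) y)

theorem source_pos_of_accepts {Γ : ℝ} (hΓ : 0 ≤ Γ) {ω : Q × (A × B × W) × X × Z × Y}
    (h : M.Accepts Γ ω) : 0 < M.source ω.2.1 :=
  And.left <| And.right <| M.factors_pos_of_joint_pos <| (h .fst).trans_le' <| mul_nonneg hΓ <|
    Finset.sum_nonneg fun ω' _ => mul_nonneg (M.isPmf_joint.1 ω') (M.rivalCount_nonneg .fst ω' ω)

theorem sum_joint_mul_sum_rivalCount_le {Γ : ℝ} (hΓ : 0 < Γ) (e : DecodingError) :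
    ∑ ω, M.joint ω * ∑ ω', M.rivalCount e ω ω' * (if M.Accepts Γ ω' then 1 else 0) ≤ 1 / Γ := by
  calc ∑ ω, M.joint ω * ∑ ω', M.rivalCount e ω ω' * (if M.Accepts Γ ω' then 1 else 0)
    _ = ∑ ω', M.meanRivalCount e ω' * (if M.Accepts Γ ω' then 1 else 0) := by
      simp only [Finset.mul_sum, meanRivalCount, Finset.sum_mul, mul_assoc]
      exact Finset.sum_comm
    _ ≤ ∑ ω', M.joint ω' / Γ := by
      refine Finset.sum_le_sum fun ω' _ => ?_
      rw [le_div_iff₀' hΓ]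
      split_ifs with h
      · simpa using (h e).le
      · simpa using M.isPmf_joint.1 ω'
    _ = 1 / Γ := by rw [← Finset.sum_div, M.isPmf_joint.2]

variable [Fintype U]

theorem sum_codebookProb_mul_rival_le {a a' : A} {b b' : B} (hu : M.common₁ a = M.common₂ b)
    (hne : (a', b') ≠ (a, b)) (w : W) (y : Y) {F : Q × (A × B × W) × X × Z × Y → ℝ}
    (hF : ∀ ω, 0 ≤ F ω) (hF' : ∀ ω, F ω ≠ 0 → M.common₁ ω.2.1.1 = M.common₂ ω.2.1.2.1) :
    ∑ c, M.codebookProb c * (M.chan (c.2.1 a) (c.2.2 b) y *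
        F (transmission (M.codewords c a' b') (a', b', w) y)) ≤
      ∑ t, M.codewordProb a b t * (M.chan t.2.1 t.2.2 y *
        ∑ t', (∑ e, M.rivalCount e (transmission t (a, b, w) y)
          (transmission t' (a', b', w) y)) * F (transmission t' (a', b', w) y)) := by
  by_cases hu' : M.common₁ a' = M.common₂ b'
  · obtain ⟨e, he⟩ := M.exists_redraw_mul_eq_rivalCount hu hu' hne w y
    refine (M.sum_codebookProb_mul_pair hu hu' fun t t' =>
      M.chan t.2.1 t.2.2 y * F (transmission t' (a', b', w) y)).trans_le ?_
    refine Finset.sum_le_sum fun t _ => mul_le_mul_of_nonneg_left ?_ (M.codewordProb_nonneg a b t)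
    rw [Finset.mul_sum]
    refine Finset.sum_le_sum fun t' _ => ?_
    rw [he, mul_left_comm]
    refine mul_le_mul_of_nonneg_left (mul_le_mul_of_nonneg_right ?_ (hF _)) ((M.isPmf_chan _ _).1 y)
    exact Finset.single_le_sum (f := fun e => M.rivalCount e (transmission t (a, b, w) y) _)
      (fun e _ => M.rivalCount_nonneg e _ _) (Finset.mem_univ e)
  · have hzero (t : Q × X × Z) : F (transmission t (a', b', w) y) = 0 :=
      not_not.mp fun h => hu' (hF' _ h)
    simp [hzero]

theorem sum_codebookProb_mul_rivals_le {a : A} {b : B} (hu : M.common₁ a = M.common₂ b)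
    (w : W) (y : Y) {F : Q × (A × B × W) × X × Z × Y → ℝ}
    (hF : ∀ ω, 0 ≤ F ω) (hF' : ∀ ω, F ω ≠ 0 → M.common₁ ω.2.1.1 = M.common₂ ω.2.1.2.1) :
    ∑ c, M.codebookProb c * (M.chan (c.2.1 a) (c.2.2 b) y * ∑ s with s ≠ (a, b),
        F (transmission (M.codewords c s.1 s.2) (s.1, s.2, w) y)) ≤
      ∑ t, M.codewordProb a b t * (M.chan t.2.1 t.2.2 y *
        ∑ ω', (∑ e, M.rivalCount e (transmission t (a, b, w) y) ω') * F ω') := by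
  have hG (t : Q × X × Z) (ω' : Q × (A × B × W) × X × Z × Y) :
      0 ≤ (∑ e, M.rivalCount e (transmission t (a, b, w) y) ω') * F ω' :=
    mul_nonneg (Finset.sum_nonneg fun e _ => M.rivalCount_nonneg e _ _) (hF ω')
  simp only [Finset.mul_sum (s := Finset.filter _ _)]
  rw [Finset.sum_comm]
  refine (Finset.sum_le_sum fun s hs => M.sum_codebookProb_mul_rival_le hu
    (Finset.mem_filter.mp hs).2 w y hF hF').trans ?_
  rw [Finset.sum_comm]
  refine Finset.sum_le_sum fun t _ => ?_
  simp only [← Finset.mul_sum (s := Finset.filter _ _)]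
  refine mul_le_mul_of_nonneg_left (mul_le_mul_of_nonneg_left ?_ ((M.isPmf_chan _ _).1 y))
    (M.codewordProb_nonneg a b t)
  exact (Finset.sum_le_univ_sum_of_nonneg fun s => Finset.sum_nonneg fun t' _ => hG t _).trans
    (sum_section_le (hG t) w y)

theorem sum_codebookProb_mul_errorProb_decoder_le [Nonempty (A × B)] {Γ : ℝ} (hΓ : 0 < Γ) :
    ∑ c, M.codebookProb c * M.errorProb c.2.1 c.2.2 (M.decoder Γ c) ≤
      ∑ ω, M.joint ω * ((if M.Accepts Γ ω then 0 else 1) +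
        ∑ ω', (∑ e, M.rivalCount e ω ω') * if M.Accepts Γ ω' then 1 else 0) := by
  have hunion (c : M.Codebook) (s : A × B × W) (y : Y) :=
    ite_epsilon_eq_le (fun s' : A × B =>
      M.Accepts Γ (transmission (M.codewords c s'.1 s'.2) (s'.1, s'.2, s.2.2) y)) (s.1, s.2.1)
  rw [M.sum_joint_mul]
  calc ∑ c, M.codebookProb c * M.errorProb c.2.1 c.2.2 (M.decoder Γ c)
    _ = ∑ s, M.source s * ∑ y, ∑ c, M.codebookProb c *
        (M.chan (c.2.1 s.1) (c.2.2 s.2.1) y *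
          if M.decoder Γ c y s.2.2 = (s.1, s.2.1) then 0 else 1) := by
      simp only [errorProb, Finset.mul_sum]
      rw [Finset.sum_comm]
      refine Finset.sum_congr rfl fun s _ => ?_
      rw [Finset.sum_comm]
      refine Finset.sum_congr rfl fun y _ => Finset.sum_congr rfl fun c _ => ?_
      ring
    _ ≤ _ := by
      refine Finset.sum_le_sum fun s _ => ?_
      obtain hs | hs := (M.isPmf_source.1 s).eq_or_lt
      · simp only [← hs, zero_mul, le_refl]
      refine mul_le_mul_of_nonneg_left (Finset.sum_le_sum fun y _ => ?_) hs.le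
      have hu := M.common_eq s hs
      refine (Finset.sum_le_sum fun c _ => mul_le_mul_of_nonneg_left (mul_le_mul_of_nonneg_left
        (hunion c s y) ((M.isPmf_chan _ _).1 y)) (M.isPmf_codebookProb.1 c)).trans ?_
      simp only [mul_add, Finset.sum_add_distrib]
      refine add_le_add (M.sum_codebookProb_mul_codewords hu fun t => M.chan t.2.1 t.2.2 y *
        if M.Accepts Γ (transmission t s y) then 0 else 1).le ?_
      exact M.sum_codebookProb_mul_rivals_le hu s.2.2 y
        (F := fun ω => if M.Accepts Γ ω then 1 else 0) (fun ω => by positivity)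
        fun ω h => M.common_eq _ (M.source_pos_of_accepts hΓ.le (ite_ne_right_iff.mp h).1)

end OneShot

theorem exists_errorProb_le [Finite U] {Γ : ℝ} (hΓ : 0 < Γ) :
    ∃ (f : A → X) (g : B → Z) (d : Y → W → A × B), M.errorProb f g d ≤
      ∑ e, (∑ ω, M.joint ω * (if M.joint ω ≤ Γ * M.meanRivalCount e ω then 1 else 0) + 1 / Γ) := by
  cases nonempty_fintype U
  have : Nonempty (A × B) := M.isPmf_source.nonempty.map fun s => (s.1, s.2.1)
  obtain ⟨c, hc⟩ := M.isPmf_codebookProb.exists_le_of_sum_mul_le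
    (M.sum_codebookProb_mul_errorProb_decoder_le hΓ)
  refine ⟨c.2.1, c.2.2, M.decoder Γ c, hc.trans ?_⟩
  simp only [mul_add, Finset.sum_add_distrib]
  refine add_le_add ?_ ?_
  · rw [Finset.sum_comm]
    refine Finset.sum_le_sum fun ω _ => ?_
    rw [← Finset.mul_sum]
    refine mul_le_mul_of_nonneg_left ?_ (M.isPmf_joint.1 ω)
    split_ifs with h
    · exact Finset.sum_nonneg fun e _ => by positivity
    obtain ⟨e, he⟩ := not_forall.mp h
    refine le_trans ?_ (Finset.single_le_sum (fun e _ => ?_) (Finset.mem_univ e))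
    · rw [if_pos (not_lt.mp he)]
    · positivity
  · simp only [Finset.sum_mul, Finset.mul_sum]
    rw [Finset.sum_comm_cycle]
    simp only [← Finset.mul_sum]
    exact Finset.sum_le_sum fun e _ => M.sum_joint_mul_sum_rivalCount_le hΓ e

/-! ### Block schemes -/

/-- Blocks of `n` triples of source letters, read as triples of blocks of `n` source letters. -/
def sourceBlocks (n : ℕ) :
    (Fin n → A × B × W) ≃ (Fin n → A) × (Fin n → B) × (Fin n → W) where
  toFun s := (fun i => (s i).1, fun i => (s i).2.1, fun i => (s i).2.2)
  invFun s i := (s.1 i, s.2.1 i, s.2.2 i)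
  left_inv _ := rfl
  right_inv _ := rfl

/-- The scheme in which `n` consecutive independent uses of `M` count as a single use. -/
def block (n : ℕ) : SuperpositionScheme (Fin n → A) (Fin n → B) (Fin n → W) (Fin n → X)
    (Fin n → Z) (Fin n → Y) (Fin n → Q) (Fin n → U) where
  cloud q := ∏ i, M.cloud (q i)
  source s := ∏ i, M.source (s.1 i, s.2.1 i, s.2.2 i)
  enc₁ q a x := ∏ i, M.enc₁ (q i) (a i) (x i)
  enc₂ q b z := ∏ i, M.enc₂ (q i) (b i) (z i)
  chan x z y := ∏ i, M.chan (x i) (z i) (y i)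
  common₁ a i := M.common₁ (a i)
  common₂ b i := M.common₂ (b i)
  isPmf_cloud := .pi fun _ => M.isPmf_cloud
  isPmf_source := ⟨fun _ => Finset.prod_nonneg fun _ _ => M.isPmf_source.1 _,
    ((sourceBlocks n).symm.sum_comp fun s => ∏ i, M.source (s i)).trans
      (IsPmf.pi fun _ => M.isPmf_source).2⟩
  isPmf_enc₁ q a := .pi fun i => M.isPmf_enc₁ (q i) (a i)
  isPmf_enc₂ q b := .pi fun i => M.isPmf_enc₂ (q i) (b i)
  isPmf_chan x z := .pi fun i => M.isPmf_chan (x i) (z i)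
  common_eq s hs := funext fun i => M.common_eq (s.1 i, s.2.1 i, s.2.2 i) <|
    (M.isPmf_source.1 _).lt_of_ne' fun h0 => hs.ne' (Finset.prod_eq_zero (Finset.mem_univ i) h0)

theorem macErr_eq_errorProb_block (n : ℕ) (f : (Fin n → A) → Fin n → X)
    (g : (Fin n → B) → Fin n → Z) (d : (Fin n → Y) → (Fin n → W) → (Fin n → A) × (Fin n → B)) :
    macErr M.source M.chan n n f g d = (M.block n).errorProb f g d :=
  Fintype.sum_equiv (sourceBlocks n) _ _ fun _ => Finset.sum_congr rfl fun _ _ => by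
    refine congrArg₂ (· * ·) rfl ?_
    congr

/-- The outcome of a single use of `M.block n` made up of the outcomes of `n` uses of `M`. -/
def outcomeBlocks (n : ℕ) : (Fin n → Q × (A × B × W) × X × Z × Y) ≃
    (Fin n → Q) × ((Fin n → A) × (Fin n → B) × (Fin n → W)) × (Fin n → X) × (Fin n → Z) ×
      (Fin n → Y) where
  toFun ω := (fun i => (ω i).1, sourceBlocks n fun i => (ω i).2.1, fun i => (ω i).2.2.1,
    fun i => (ω i).2.2.2.1, fun i => (ω i).2.2.2.2)
  invFun ω i := (ω.1 i, (sourceBlocks n).symm ω.2.1 i, ω.2.2.1 i, ω.2.2.2.1 i, ω.2.2.2.2 i)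
  left_inv _ := rfl
  right_inv _ := rfl

theorem joint_block (n : ℕ) (ω : Fin n → Q × (A × B × W) × X × Z × Y) :
    (M.block n).joint (outcomeBlocks n ω) = ∏ i, M.joint (ω i) := by
  simp only [joint, Finset.prod_mul_distrib]
  rfl

theorem agree_block (n : ℕ) (e : DecodingError) (ω' ω : Fin n → Q × (A × B × W) × X × Z × Y) :
    (M.block n).Agree e (outcomeBlocks n ω') (outcomeBlocks n ω) ↔
      ∀ i, M.Agree e (ω' i) (ω i) := by
  cases e <;>
    simp only [Agree, outcomeBlocks, sourceBlocks, block, Equiv.coe_fn_mk, Prod.mk.injEq,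
      funext_iff, forall_and]

theorem fresh_block (n : ℕ) (e : DecodingError) (ω : Fin n → Q × (A × B × W) × X × Z × Y) :
    (M.block n).fresh e (outcomeBlocks n ω) = ∏ i, M.fresh e (ω i) := by
  cases e <;> simp only [fresh, Finset.prod_mul_distrib] <;> rfl

theorem rivalCount_block (n : ℕ) (e : DecodingError)
    (ω ω' : Fin n → Q × (A × B × W) × X × Z × Y) :
    (M.block n).rivalCount e (outcomeBlocks n ω) (outcomeBlocks n ω') =
      ∏ i, M.rivalCount e (ω i) (ω' i) := by
  simp only [rivalCount, agree_block, fresh_block, Finset.prod_ite_zero, Finset.mem_univ,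
    true_imp_iff]

theorem meanRivalCount_block (n : ℕ) (e : DecodingError)
    (ω : Fin n → Q × (A × B × W) × X × Z × Y) :
    (M.block n).meanRivalCount e (outcomeBlocks n ω) = ∏ i, M.meanRivalCount e (ω i) := by
  simp only [meanRivalCount, Fintype.prod_sum, Finset.prod_mul_distrib]
  rw [← (outcomeBlocks n).sum_comp]
  simp only [joint_block, rivalCount_block]

theorem agree_refl (e : DecodingError) (ω : Q × (A × B × W) × X × Z × Y) : M.Agree e ω ω := by
  cases e <;> rfl

theorem fresh_pos_of_joint_pos (e : DecodingError) {ω : Q × (A × B × W) × X × Z × Y}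
    (h : 0 < M.joint ω) : 0 < M.fresh e ω := by
  obtain ⟨hq, -, h₁, h₂, -⟩ := M.factors_pos_of_joint_pos h
  cases e <;> simp only [fresh] <;> positivity

theorem meanRivalCount_pos_of_joint_pos (e : DecodingError) {ω : Q × (A × B × W) × X × Z × Y}
    (h : 0 < M.joint ω) : 0 < M.meanRivalCount e ω := by
  refine Finset.sum_pos' (fun ω' _ => mul_nonneg (M.isPmf_joint.1 ω') (M.rivalCount_nonneg e ω' ω))
    ⟨ω, Finset.mem_univ ω, mul_pos h ?_⟩
  rw [rivalCount, if_pos (M.agree_refl e ω)]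
  exact M.fresh_pos_of_joint_pos e h

/-! ### Vanishing error probability -/

theorem exists_errorProb_block_le [Finite U] (n : ℕ) (δ : ℝ) :
    ∃ (f : (Fin n → A) → Fin n → X) (g : (Fin n → B) → Fin n → Z)
      (d : (Fin n → Y) → (Fin n → W) → (Fin n → A) × (Fin n → B)),
      (M.block n).errorProb f g d ≤ ∑ e, (∑ ω : Fin n → Q × (A × B × W) × X × Z × Y,
        (∏ i, M.joint (ω i)) * (if ∏ i, M.joint (ω i) ≤
          Real.exp (n * δ) * ∏ i, M.meanRivalCount e (ω i) then 1 else 0) + Real.exp (-δ) ^ n) := by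
  obtain ⟨f, g, d, h⟩ := (M.block n).exists_errorProb_le (Real.exp_pos (n * δ))
  refine ⟨f, g, d, h.trans_eq (Finset.sum_congr rfl fun e _ => ?_)⟩
  rw [← Real.exp_nat_mul, one_div, ← Real.exp_neg, mul_neg, ← (outcomeBlocks n).sum_comp]
  simp only [joint_block, meanRivalCount_block]

theorem exists_macErr_lt [Finite U]
    (h : ∀ e, 0 < relEntropy M.joint (M.meanRivalCount e)) {ε : ℝ} (hε : 0 < ε) :
    ∃ n : ℕ, 0 < n ∧ ∃ (f : (Fin n → A) → Fin n → X) (g : (Fin n → B) → Fin n → Z)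
      (d : (Fin n → Y) → (Fin n → W) → (Fin n → A) × (Fin n → B)),
      macErr M.source M.chan n n f g d < ε := by
  obtain ⟨δ, hδ, hlt⟩ : ∃ δ > 0, ∀ e, δ < relEntropy M.joint (M.meanRivalCount e) :=
    ((Filter.eventually_all.mpr fun e => Ioo_mem_nhdsGT (h e)).mono fun δ hδ =>
      ⟨(hδ .fst).1, fun e => (hδ e).2⟩).exists
  choose c hc₀ hc₁ hc using fun e => M.isPmf_joint.exists_likelihoodRatio_tail_le_pow
    (fun _ => M.meanRivalCount_pos_of_joint_pos e) (hlt e)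
  have hlim : Filter.Tendsto (fun n : ℕ => ∑ e, (c e ^ n + Real.exp (-δ) ^ n)) Filter.atTop
      (nhds (∑ _e : DecodingError, (0 + 0))) :=
    tendsto_finsetSum _ fun e _ => (tendsto_pow_atTop_nhds_zero_of_lt_one (hc₀ e) (hc₁ e)).add
      (tendsto_pow_atTop_nhds_zero_of_lt_one (Real.exp_pos _).le
        (Real.exp_lt_one_iff.mpr (neg_neg_of_pos hδ)))
  simp only [add_zero, Finset.sum_const_zero] at hlim
  obtain ⟨n, hn, hn₀⟩ := ((hlim.eventually (gt_mem_nhds hε)).and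
    (Filter.eventually_gt_atTop 0)).exists
  obtain ⟨f, g, d, hfgd⟩ := M.exists_errorProb_block_le n δ
  refine ⟨n, hn₀, f, g, d, ?_⟩
  rw [macErr_eq_errorProb_block]
  exact (hfgd.trans (Finset.sum_le_sum fun e _ => add_le_add_left (hc e n) _)).trans_lt hn

/-! ### Error exponents and information -/

theorem sum_joint_mul_eq (F : Q × (A × B × W) × X × Z × Y → ℝ) :
    ∑ ω, M.joint ω * F ω = ∑ q, M.cloud q * ∑ s, M.source s * ∑ x, M.enc₁ q s.1 x *
      ∑ z, M.enc₂ q s.2.1 z * ∑ y, M.chan x z y * F (q, s, x, z, y) := by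
  simp only [Fintype.sum_prod_type, Finset.mul_sum, joint, mul_assoc]

theorem prD_joint {α : Type} (T : Q × (A × B × W) × X × Z × Y → α) (t : α) :
    prD M.joint T t = ∑ q, M.cloud q * ∑ s, M.source s * ∑ x, M.enc₁ q s.1 x *
      ∑ z, M.enc₂ q s.2.1 z * ∑ y, M.chan x z y *
        ({t} : Set α).indicator 1 (T (q, s, x, z, y)) := by
  rw [← M.sum_joint_mul_eq fun ω => ({t} : Set α).indicator 1 (T ω)]
  simp only [prD, Set.indicator_apply, Set.mem_singleton_iff, Pi.one_apply,
    mul_ite, mul_one, mul_zero]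

theorem prD_joint_source {α : Type} (V : A × B × W → α) (v : α) :
    prD M.joint (fun ω => V ω.2.1) v = prD M.source V v := by
  rw [prD_joint]
  simp only [← Finset.sum_mul, (M.isPmf_chan _ _).2, (M.isPmf_enc₁ _ _).2, (M.isPmf_enc₂ _ _).2,
    M.isPmf_cloud.2, one_mul]
  simp only [prD, Set.indicator_apply, Set.mem_singleton_iff, Pi.one_apply,
    mul_ite, mul_one, mul_zero]

theorem ent_joint_source {α : Type} [Fintype α] (V : A × B × W → α) :
    ent M.joint (fun ω => V ω.2.1) = ent M.source V := by
  simp only [ent, prD_joint_source]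

/-- The part of an outcome which is settled before the channel is used. -/
def inputs : Q × (A × B × W) × X × Z × Y → Q × (A × B × W) × X × Z
  | (q, s, x, z, _) => (q, s, x, z)

theorem prD_joint_output {α : Type} (D : Q × (A × B × W) × X × Z → α)
    (hD : ∀ v v', D v = D v' → v.2.2 = v'.2.2) (ω : Q × (A × B × W) × X × Z × Y) :
    prD M.joint (fun ω => (ω.2.2.2.2, D (inputs ω)))
        (ω.2.2.2.2, D (inputs ω)) =
      prD M.joint (fun ω => D (inputs ω))
        (D (inputs ω)) * M.chan ω.2.2.1 ω.2.2.2.1 ω.2.2.2.2 := by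
  have h (q s x z) : ∑ y, M.chan x z y *
      ({(ω.2.2.2.2, D (inputs ω))} : Set (Y × α)).indicator 1 (y, D (q, s, x, z)) =
        ({D (inputs ω)} : Set α).indicator 1 (D (q, s, x, z)) *
          M.chan ω.2.2.1 ω.2.2.2.1 ω.2.2.2.2 := by
    by_cases hv : D (q, s, x, z) = D (inputs ω)
    · obtain ⟨hx, hz⟩ := Prod.mk.inj (hD _ _ hv)
      rw [show x = ω.2.2.1 from hx, show z = ω.2.2.2.1 from hz] at hv ⊢
      simp [Set.indicator_apply, hv]
    · simp [hv]
  generalize D (inputs ω) = v at h ⊢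
  rw [prD_joint, prD_joint]
  simp only [inputs, h, ← Finset.sum_mul, (M.isPmf_chan _ _).2, one_mul]
  simp only [Finset.sum_mul, mul_assoc]

theorem meanRivalCount_eq_prD_mul_fresh {e : DecodingError} {α : Type}
    {T : Q × (A × B × W) × X × Z × Y → α} (hT : ∀ ω' ω, M.Agree e ω' ω ↔ T ω' = T ω)
    (ω : Q × (A × B × W) × X × Z × Y) :
    M.meanRivalCount e ω = prD M.joint T (T ω) * M.fresh e ω := by
  simp only [meanRivalCount, rivalCount, hT, prD, Finset.sum_mul, mul_ite, ite_mul, mul_zero,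
    zero_mul, eq_comm]

theorem condMutInf_joint_output {ξ γ : Type} [Fintype ξ] [Fintype γ]
    (I : Q × (A × B × W) × X × Z → ξ) (C : Q × (A × B × W) × X × Z → γ)
    (hI : ∀ v v', (I v, C v) = (I v', C v') → v.2.2 = v'.2.2) :
    condMutInf M.joint (fun ω => I (inputs ω)) (fun ω => ω.2.2.2.2)
        (fun ω => C (inputs ω)) =
      condEnt M.joint (fun ω => ω.2.2.2.2) (fun ω => C (inputs ω)) +
        ∑ ω, M.joint ω * Real.log (M.chan ω.2.2.1 ω.2.2.2.1 ω.2.2.2.2) := by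
  have h := ent_eq_sub_sum_mul_log M.isPmf_joint.1 (M.prD_joint_output (fun v => (I v, C v)) hI)
  rw [condMutInf_eq_condEnt_sub_condEnt, condEnt.eq_1 _ _ fun ω => (_, _), h]
  ring

theorem relEntropy_meanRivalCount_eq_ent_add {τ : Type} [Fintype τ] {e : DecodingError}
    {T : Q × (A × B × W) × X × Z × Y → τ} (hT : ∀ ω' ω, M.Agree e ω' ω ↔ T ω' = T ω)
    {L : Q × (A × B × W) × X × Z × Y → ℝ}
    (hL : ∀ ω, M.joint ω =
      L ω * M.fresh e ω * M.source ω.2.1 * M.chan ω.2.2.1 ω.2.2.2.1 ω.2.2.2.2) :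
    relEntropy M.joint (M.meanRivalCount e) = ent M.joint T +
      ∑ ω, M.joint ω * Real.log (L ω) + ∑ ω, M.joint ω * Real.log (M.source ω.2.1) +
        ∑ ω, M.joint ω * Real.log (M.chan ω.2.2.1 ω.2.2.2.1 ω.2.2.2.2) := by
  rw [relEntropy, ent_eq_neg_sum_mul_log, ← Finset.sum_neg_distrib, ← Finset.sum_add_distrib,
    ← Finset.sum_add_distrib, ← Finset.sum_add_distrib]
  refine Finset.sum_congr rfl fun ω _ => ?_
  obtain h0 | hpos := (M.isPmf_joint.1 ω).eq_or_lt
  · simp only [← h0, zero_mul, add_zero, neg_zero]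
  have hprD := (prD_apply_pos M.isPmf_joint.1 T hpos).ne'
  have hne := hpos.ne'
  simp only [hL ω, mul_ne_zero_iff] at hne
  obtain ⟨⟨⟨hLω, hfresh⟩, hsource⟩, hchan⟩ := hne
  have hlog : Real.log (M.joint ω) = Real.log (L ω) + Real.log (M.fresh e ω) +
      Real.log (M.source ω.2.1) + Real.log (M.chan ω.2.2.1 ω.2.2.2.1 ω.2.2.2.2) := by
    rw [hL ω, Real.log_mul (by positivity) hchan, Real.log_mul (by positivity) hsource,
      Real.log_mul hLω hfresh]
  rw [hlog, M.meanRivalCount_eq_prD_mul_fresh hT, Real.log_mul hprD hfresh]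
  ring

/- `S` consists of the source letters which errors of kind `e` get wrong, `V` of the others; `C` is
all that a wrong transmission shares with the true one before the channel is used, `L` is the
conditional law of `C` given `V`, and `I` makes up for the channel inputs that are not in `C`. -/
theorem relEntropy_meanRivalCount_eq {σ ν ξ γ : Type} [Fintype σ] [Fintype ν] [Fintype ξ]
    [Fintype γ] (e : DecodingError) (S : A × B × W → σ) (V : A × B × W → ν)
    (I : Q × (A × B × W) × X × Z → ξ) (C : Q × (A × B × W) × X × Z → γ)
    (L : Q × (A × B × W) × X × Z × Y → ℝ)
    (hS : Function.Injective fun s => (S s, V s))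
    (hI : ∀ v v', (I v, C v) = (I v', C v') → v.2.2 = v'.2.2)
    (hagree : ∀ ω' ω : Q × (A × B × W) × X × Z × Y, M.Agree e ω' ω ↔
      (ω'.2.2.2.2, C (inputs ω')) = (ω.2.2.2.2, C (inputs ω)))
    (hC : ∀ ω, prD M.joint (fun ω => C (inputs ω)) (C (inputs ω)) =
      prD M.source V (V ω.2.1) * L ω)
    (hL : ∀ ω, M.joint ω =
      L ω * M.fresh e ω * M.source ω.2.1 * M.chan ω.2.2.1 ω.2.2.2.1 ω.2.2.2.2) :
    relEntropy M.joint (M.meanRivalCount e) =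
      condMutInf M.joint (fun ω => I (inputs ω)) (fun ω => ω.2.2.2.2)
        (fun ω => C (inputs ω)) - condEnt M.source S V := by
  have hsource : ent M.source (fun s => (S s, V s)) =
      -∑ ω, M.joint ω * Real.log (M.source ω.2.1) := by
    rw [← ent_joint_source, ent_eq_neg_sum_mul_log]
    simp only [M.prD_joint_source fun s => (S s, V s), prD_apply_of_injective hS]
  have hshared := ent_eq_sub_sum_mul_log M.isPmf_joint.1 fun ω =>
    (hC ω).trans (congrArg (· * L ω) (M.prD_joint_source V _).symm)
  rw [ent_joint_source] at hshared
  rw [M.relEntropy_meanRivalCount_eq_ent_add hagree hL, M.condMutInf_joint_output I C hI,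
    condEnt, condEnt, hshared, hsource]
  ring

theorem prD_joint_fst (ω : Q × (A × B × W) × X × Z × Y) :
    prD M.joint (fun ω => (ω.2.2.1, ω.2.1.1, ω.2.1.2.2, ω.1))
        (ω.2.2.1, ω.2.1.1, ω.2.1.2.2, ω.1) =
      prD M.source (fun s => (s.1, s.2.2)) (ω.2.1.1, ω.2.1.2.2) *
        (M.cloud ω.1 * M.enc₁ ω.1 ω.2.1.1 ω.2.2.1) := by
  have h (q : Q) (s : A × B × W) : ∑ x, M.enc₁ q s.1 x *
      ({(ω.2.2.1, ω.2.1.1, ω.2.1.2.2, ω.1)} : Set (X × A × W × Q)).indicator 1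
        (x, s.1, s.2.2, q) =
        ({(ω.2.1.1, ω.2.1.2.2)} : Set (A × W)).indicator 1 (s.1, s.2.2) *
          ({ω.1} : Set Q).indicator (fun q => M.enc₁ q ω.2.1.1 ω.2.2.1) q := by
    simp only [Set.indicator_apply, Set.mem_singleton_iff, Prod.mk.injEq]
    by_cases hs : s.1 = ω.2.1.1 ∧ s.2.2 = ω.2.1.2.2 <;> by_cases hq : q = ω.1 <;> simp [hs, hq]
  rw [prD_joint]
  simp only [← Finset.sum_mul, (M.isPmf_chan _ _).2, (M.isPmf_enc₂ _ _).2, one_mul, h, ← mul_assoc]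
  simp [prD, Set.indicator_apply, mul_comm]

theorem prD_joint_snd (ω : Q × (A × B × W) × X × Z × Y) :
    prD M.joint (fun ω => (ω.2.2.2.1, ω.2.1.2.1, ω.2.1.2.2, ω.1))
        (ω.2.2.2.1, ω.2.1.2.1, ω.2.1.2.2, ω.1) =
      prD M.source (fun s => (s.2.1, s.2.2)) (ω.2.1.2.1, ω.2.1.2.2) *
        (M.cloud ω.1 * M.enc₂ ω.1 ω.2.1.2.1 ω.2.2.2.1) := by
  have h (q : Q) (s : A × B × W) : ∑ z, M.enc₂ q s.2.1 z *
      ({(ω.2.2.2.1, ω.2.1.2.1, ω.2.1.2.2, ω.1)} : Set (Z × B × W × Q)).indicator 1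
        (z, s.2.1, s.2.2, q) =
        ({(ω.2.1.2.1, ω.2.1.2.2)} : Set (B × W)).indicator 1 (s.2.1, s.2.2) *
          ({ω.1} : Set Q).indicator (fun q => M.enc₂ q ω.2.1.2.1 ω.2.2.2.1) q := by
    simp only [Set.indicator_apply, Set.mem_singleton_iff, Prod.mk.injEq]
    by_cases hs : s.2.1 = ω.2.1.2.1 ∧ s.2.2 = ω.2.1.2.2 <;> by_cases hq : q = ω.1 <;>
      simp [hs, hq]
  rw [prD_joint]
  simp only [← Finset.sum_mul, (M.isPmf_chan _ _).2, (M.isPmf_enc₁ _ _).2, one_mul, h, ← mul_assoc]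
  simp [prD, Set.indicator_apply, mul_comm]

theorem prD_joint_common (ω : Q × (A × B × W) × X × Z × Y) :
    prD M.joint (fun ω => (M.common₁ ω.2.1.1, ω.2.1.2.2, ω.1))
        (M.common₁ ω.2.1.1, ω.2.1.2.2, ω.1) =
      prD M.source (fun s => (M.common₁ s.1, s.2.2)) (M.common₁ ω.2.1.1, ω.2.1.2.2) *
        M.cloud ω.1 := by
  rw [prD_joint]
  simp only [← Finset.sum_mul, (M.isPmf_chan _ _).2, (M.isPmf_enc₁ _ _).2, (M.isPmf_enc₂ _ _).2,
    one_mul, ← Set.singleton_prod_singleton, Set.indicator_prod_one, ← mul_assoc]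
  simp [prD, Set.indicator_apply, mul_comm, ite_and]

theorem relEntropy_meanRivalCount_fst :
    relEntropy M.joint (M.meanRivalCount .fst) =
      condMutInf M.joint (fun ω => ω.2.2.1) (fun ω => ω.2.2.2.2)
        (fun ω => (ω.2.2.2.1, ω.2.1.2.1, ω.2.1.2.2, ω.1)) -
      condEnt M.source (fun s => s.1) (fun s => (s.2.1, s.2.2)) :=
  M.relEntropy_meanRivalCount_eq .fst (fun s => s.1) (fun s => (s.2.1, s.2.2))
    (fun v => v.2.2.1) (fun v => (v.2.2.2, v.2.1.2.1, v.2.1.2.2, v.1))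
    (fun ω => M.cloud ω.1 * M.enc₂ ω.1 ω.2.1.2.1 ω.2.2.2.1)
    (fun s s' h => by simpa only [Prod.ext_iff, Prod.mk.injEq] using h)
    (fun v v' h => by simp_all [Prod.ext_iff])
    (fun _ _ => Iff.rfl) M.prD_joint_snd (fun ω => by simp only [joint, fresh]; ring)

theorem relEntropy_meanRivalCount_snd :
    relEntropy M.joint (M.meanRivalCount .snd) =
      condMutInf M.joint (fun ω => ω.2.2.2.1) (fun ω => ω.2.2.2.2)
        (fun ω => (ω.2.2.1, ω.2.1.1, ω.2.1.2.2, ω.1)) -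
      condEnt M.source (fun s => s.2.1) (fun s => (s.1, s.2.2)) :=
  M.relEntropy_meanRivalCount_eq .snd (fun s => s.2.1) (fun s => (s.1, s.2.2))
    (fun v => v.2.2.2) (fun v => (v.2.2.1, v.2.1.1, v.2.1.2.2, v.1))
    (fun ω => M.cloud ω.1 * M.enc₁ ω.1 ω.2.1.1 ω.2.2.1)
    (fun s s' h => by simp_all [Prod.ext_iff])
    (fun v v' h => by simp_all [Prod.ext_iff])
    (fun _ _ => Iff.rfl) M.prD_joint_fst (fun ω => by simp only [joint, fresh]; ring)

theorem relEntropy_meanRivalCount_both [Fintype U] :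
    relEntropy M.joint (M.meanRivalCount .both) =
      condMutInf M.joint (fun ω => (ω.2.2.1, ω.2.2.2.1)) (fun ω => ω.2.2.2.2)
        (fun ω => (M.common₁ ω.2.1.1, ω.2.1.2.2, ω.1)) -
      condEnt M.source (fun s => (s.1, s.2.1)) (fun s => (M.common₁ s.1, s.2.2)) :=
  M.relEntropy_meanRivalCount_eq .both (fun s => (s.1, s.2.1)) (fun s => (M.common₁ s.1, s.2.2))
    (fun v => v.2.2) (fun v => (M.common₁ v.2.1.1, v.2.1.2.2, v.1)) (fun ω => M.cloud ω.1)
    (fun s s' h => by simp_all [Prod.ext_iff]) (fun _ _ h => (Prod.mk.inj h).1)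
    (fun _ _ => Iff.rfl) M.prD_joint_common (fun ω => by simp only [joint, fresh]; ring)

theorem relEntropy_meanRivalCount_common :
    relEntropy M.joint (M.meanRivalCount .common) =
      condMutInf M.joint (fun ω => (ω.2.2.1, ω.2.2.2.1)) (fun ω => ω.2.2.2.2)
        (fun ω => ω.2.1.2.2) -
      condEnt M.source (fun s => (s.1, s.2.1)) (fun s => s.2.2) :=
  M.relEntropy_meanRivalCount_eq .common (fun s => (s.1, s.2.1)) (fun s => s.2.2)
    (fun v => v.2.2) (fun v => v.2.1.2.2) (fun _ => 1)
    (fun s s' h => by simp_all [Prod.ext_iff]) (fun _ _ h => (Prod.mk.inj h).1)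
    (fun _ _ => Iff.rfl) (fun _ => (M.prD_joint_source (fun s => s.2.2) _).trans (mul_one _).symm)
    (fun ω => by simp only [joint, fresh]; ring)

end SuperpositionScheme

theorem mac_correlated_sources_rate_one_achievable_general
    {S1 S2 W1 X1 X2 Y1 U : Type}
    [Fintype S1] [Fintype S2] [Fintype W1] [Fintype X1] [Fintype X2] [Fintype Y1] [Fintype U]
    (pS : S1 × S2 × W1 → ℝ) (hpS : IsPmf pS)
    (chan : X1 → X2 → Y1 → ℝ) (hchan : ∀ x1 x2, IsPmf (chan x1 x2))
    (nq : ℕ) (pq : Fin nq → ℝ) (hpq : IsPmf pq)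
    (px1 : Fin nq → S1 → X1 → ℝ) (hpx1 : ∀ q s1, IsPmf (px1 q s1))
    (px2 : Fin nq → S2 → X2 → ℝ) (hpx2 : ∀ q s2, IsPmf (px2 q s2))
    (u1 : S1 → U) (u2 : S2 → U) (hu : ∀ s, 0 < pS s → u1 s.1 = u2 s.2.1)
    (hfst : condEnt pS (fun s => s.1) (fun s => (s.2.1, s.2.2)) <
      condMutInf (macJointMeasure nq pq pS px1 px2 chan)
        (fun z => z.2.2.1) (fun z => z.2.2.2.2)
        (fun z => (z.2.2.2.1, z.2.1.2.1, z.2.1.2.2, z.1)))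
    (hsnd : condEnt pS (fun s => s.2.1) (fun s => (s.1, s.2.2)) <
      condMutInf (macJointMeasure nq pq pS px1 px2 chan)
        (fun z => z.2.2.2.1) (fun z => z.2.2.2.2)
        (fun z => (z.2.2.1, z.2.1.1, z.2.1.2.2, z.1)))
    (hboth : condEnt pS (fun s => (s.1, s.2.1)) (fun s => (u1 s.1, s.2.2)) <
      condMutInf (macJointMeasure nq pq pS px1 px2 chan)
        (fun z => (z.2.2.1, z.2.2.2.1)) (fun z => z.2.2.2.2)
        (fun z => (u1 z.2.1.1, z.2.1.2.2, z.1)))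
    (hcommon : condEnt pS (fun s => (s.1, s.2.1)) (fun s => s.2.2) <
      condMutInf (macJointMeasure nq pq pS px1 px2 chan)
        (fun z => (z.2.2.1, z.2.2.2.1)) (fun z => z.2.2.2.2)
        (fun z => z.2.1.2.2)) :
    macAchievable pS chan 1 := by
  intro ε hε
  let M : SuperpositionScheme S1 S2 W1 X1 X2 Y1 (Fin nq) U :=
    ⟨pq, pS, px1, px2, chan, u1, u2, hpq, hpS, hpx1, hpx2, hchan, hu⟩
  have hD : ∀ e, 0 < relEntropy M.joint (M.meanRivalCount e)
    | .fst => (sub_pos.mpr hfst).trans_eq M.relEntropy_meanRivalCount_fst.symm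
    | .snd => (sub_pos.mpr hsnd).trans_eq M.relEntropy_meanRivalCount_snd.symm
    | .both => (sub_pos.mpr hboth).trans_eq M.relEntropy_meanRivalCount_both.symm
    | .common => (sub_pos.mpr hcommon).trans_eq M.relEntropy_meanRivalCount_common.symm
  obtain ⟨n, hn, hcode⟩ := M.exists_macErr_lt hD hε
  exact ⟨n, n, hn, hn, (one_mul _).symm, hcode⟩

/-- For arbitrarily correlated sources `(S1, S2)` and receiver side
information `W1` transmitted over a DM MAC `p(y1|x1,x2)`, source-channel rate `b = 1`
is achievable if, for some `Q` with `|Q| ≤ min{|X1|·|X2|, |Y1|}` and some joint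
distribution `p(q)p(s1,s2,w1)p(x1|q,s1)p(x2|q,s2)p(y1|x1,x2)`,
`H(S1|S2,W1) < I(X1;Y1|X2,S2,W1,Q)`, `H(S2|S1,W1) < I(X2;Y1|X1,S1,W1,Q)`,
`H(S1,S2|U,W1) < I(X1,X2;Y1|U,W1,Q)` and `H(S1,S2|W1) < I(X1,X2;Y1|W1)`,
where `U` is the Gács–Körner common part of `S1` and `S2`. -/
theorem mac_correlated_sources_rate_one_achievable
    {S1 S2 W1 X1 X2 Y1 : Type}
    [Fintype S1] [Fintype S2] [Fintype W1] [Fintype X1] [Fintype X2] [Fintype Y1]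
    (pS : S1 × S2 × W1 → ℝ) (hpS : IsPmf pS)
    (chan : X1 → X2 → Y1 → ℝ) (hchan : ∀ x1 x2, IsPmf (chan x1 x2))
    (h : ∃ (nq nu : ℕ) (pq : Fin nq → ℝ)
      (px1 : Fin nq → S1 → X1 → ℝ) (px2 : Fin nq → S2 → X2 → ℝ)
      (u1 : S1 → Fin nu) (u2 : S2 → Fin nu),
      nq ≤ min (Fintype.card X1 * Fintype.card X2) (Fintype.card Y1) ∧
      IsPmf pq ∧ (∀ q s1, IsPmf (px1 q s1)) ∧ (∀ q s2, IsPmf (px2 q s2)) ∧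
      IsGKCommonPart pS (fun s => s.1) (fun s => s.2.1) u1 u2 ∧
      (condEnt pS (fun s => s.1) (fun s => (s.2.1, s.2.2)) <
        condMutInf (macJointMeasure nq pq pS px1 px2 chan)
          (fun z => z.2.2.1) (fun z => z.2.2.2.2)
          (fun z => (z.2.2.2.1, z.2.1.2.1, z.2.1.2.2, z.1))) ∧
      (condEnt pS (fun s => s.2.1) (fun s => (s.1, s.2.2)) <
        condMutInf (macJointMeasure nq pq pS px1 px2 chan)
          (fun z => z.2.2.2.1) (fun z => z.2.2.2.2)
          (fun z => (z.2.2.1, z.2.1.1, z.2.1.2.2, z.1))) ∧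
      (condEnt pS (fun s => (s.1, s.2.1)) (fun s => (u1 s.1, s.2.2)) <
        condMutInf (macJointMeasure nq pq pS px1 px2 chan)
          (fun z => (z.2.2.1, z.2.2.2.1)) (fun z => z.2.2.2.2)
          (fun z => (u1 z.2.1.1, z.2.1.2.2, z.1))) ∧
      (condEnt pS (fun s => (s.1, s.2.1)) (fun s => s.2.2) <
        condMutInf (macJointMeasure nq pq pS px1 px2 chan)
          (fun z => (z.2.2.1, z.2.2.2.1)) (fun z => z.2.2.2.2)
          (fun z => z.2.1.2.2))) :
    macAchievable pS chan 1 := by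
  obtain ⟨nq, nu, pq, px1, px2, u1, u2, -, hpq, hpx1, hpx2, ⟨hu, -⟩, hfst, hsnd, hboth,
    hcommon⟩ := h
  exact mac_correlated_sources_rate_one_achievable_general pS hpS chan hchan nq pq hpq px1 hpx1
    px2 hpx2 u1 u2 hu hfst hsnd hboth hcommon
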